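/- Let θ(t) = t^{1/2}(log(1/t))^{3/2} and let σ be defined by σ(t) = t·exp(−∫₀^{λt} (1 − exp(−∫₀^s θ(τ) dτ/τ)) ds/s). For given α > 1 and δ ∈ (0,1) let λ = α/δ². Then there is a constant N > 0, depending only on n, such that for all w ∈ C_0^∞(ℝⁿ × [0, 1/(2λ))) the following two inequalities hold: (1) ∫_{ℝⁿ×[0,1/(2λ))} σ^{−2α} (|x|/t + |x|³/(α t²)) w² G dX ≤ N·e^{2αN}·λ^{2α+N} ∫_{ℝⁿ×[0,1/(2λ))} w² dX + N·δ ∫_{ℝⁿ×[0,1/(2λ))} σ^{−2α} (θ(λt)/t) w² G dX; and (2) ∫_{ℝⁿ×[0,1/(2λ))} σ^{−2α+1} (|x|/t + |x|³/(α t²) + |x|²/(δ t)) |∇w|² G dX ≤ N·e^{2αN}·λ^{2α+N} ∫_{ℝⁿ×[0,1/(2λ))} t|∇w|² dX + N·δ ∫_{ℝⁿ×[0,1/(2λ))} σ^{−2α+1} (θ(λt)/t) |∇w|² G dX. -/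

import Mathlib

/-!
On `l t ≤ 1 / 2` the function `σ` is comparable to `t`. Splitting space at
`‖x‖ = (n + 5) √(α t log (1 / (l t)))`, the spatial weight is at most a constant times
`δ θ(l t) / t` in the near region. In the far region the Gaussian is so small that it
absorbs `t ^ (-2α)` and leaves only a power of `l`.

The resulting pointwise bound cannot simply be integrated, since `w` need not vanish at `t = 0`:
the weighted integrals may diverge, and a divergent Bochner integral is `0`. The inequality is
trivial unless the left side is positive, hence integrable. By Fubini, after the substitution
`x = √t y`, almost every restriction of `w` to a parabola `t ↦ (√t y, t)` is then square integrable
against a large negative power of `t`, so its Taylor expansion in `√t` starts at a high order.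
This decay at `t = 0` makes the term with `θ` integrable as well.
-/

open MeasureTheory Metric Set Real

noncomputable section

/-- `ℝⁿ` as a Euclidean space. -/
abbrev En (n : ℕ) : Type := EuclideanSpace ℝ (Fin n)

/-- `θ(t) = t^{1/2} (log(1/t))^{3/2}`. -/
def thetaFun (t : ℝ) : ℝ := Real.sqrt t * Real.log (1 / t) ^ ((3 : ℝ) / 2)

/-- `σ(t) = t · exp(−∫₀^{λt} (1 − exp(−∫₀^s θ(τ) dτ/τ)) ds/s)`. -/
def sigmaFun (l : ℝ) (t : ℝ) : ℝ :=
  t * Real.exp (-∫ s in (0 : ℝ)..(l * t),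
      (1 - Real.exp (-∫ τ in (0 : ℝ)..s, thetaFun τ / τ)) / s)

/-- The Gaussian kernel `G(x,t) = t^{−n/2} e^{−|x|²/4t}`. -/
def Gfun (n : ℕ) (x : En n) (t : ℝ) : ℝ :=
  t ^ (-(n : ℝ) / 2) * Real.exp (-‖x‖ ^ 2 / (4 * t))

section PowerDomination

variable {E : Type*} [NormedAddCommGroup E] {f : ℝ → E} {C r b : ℝ}

theorem integrableOn_Ioo_of_norm_le_rpow (hr : -1 < r)
    (hf : AEStronglyMeasurable f (volume.restrict (Ioo 0 b)))
    (hle : ∀ u ∈ Ioo 0 b, ‖f u‖ ≤ C * u ^ r) : IntegrableOn f (Ioo 0 b) := by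
  rcases le_or_gt b 0 with hb | hb
  · simp [Ioo_eq_empty_of_le hb]
  · exact (((intervalIntegral.integrableOn_Ioo_rpow_iff hb).2 hr).const_mul C).mono' hf
      ((ae_restrict_mem measurableSet_Ioo).mono hle)

theorem norm_intervalIntegral_le_of_norm_le_rpow [NormedSpace ℝ E] (hr : -1 < r) (hb : 0 ≤ b)
    (hle : ∀ u ∈ Ioc 0 b, ‖f u‖ ≤ C * u ^ r) :
    ‖∫ u in (0 : ℝ)..b, f u‖ ≤ C / (r + 1) * b ^ (r + 1) :=
  calc ‖∫ u in (0 : ℝ)..b, f u‖ ≤ ∫ u in (0 : ℝ)..b, C * u ^ r :=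
        intervalIntegral.norm_integral_le_of_norm_le hb (.of_forall hle)
          ((intervalIntegral.intervalIntegrable_rpow' hr).const_mul C)
    _ = C / (r + 1) * b ^ (r + 1) := by
        rw [intervalIntegral.integral_const_mul, integral_rpow (.inl hr),
          Real.zero_rpow (by linarith)]
        ring

theorem intervalIntegral_nonneg_of_Ioc {f : ℝ → ℝ} (hb : 0 ≤ b) (hf : ∀ u ∈ Ioc 0 b, 0 ≤ f u) :
    0 ≤ ∫ u in (0 : ℝ)..b, f u := by
  rw [intervalIntegral.integral_of_le hb]
  exact setIntegral_nonneg measurableSet_Ioc hf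

end PowerDomination

section Theta

variable {u : ℝ}

theorem log_one_div_nonneg (h0 : 0 < u) (h1 : u ≤ 1) : 0 ≤ log (1 / u) :=
  log_nonneg (one_le_one_div h0 h1)

theorem thetaFun_nonneg (h0 : 0 < u) (h1 : u ≤ 1) : 0 ≤ thetaFun u :=
  mul_nonneg (sqrt_nonneg u) (rpow_nonneg (log_one_div_nonneg h0 h1) _)

theorem measurable_thetaFun : Measurable thetaFun := by
  unfold thetaFun
  fun_prop

theorem exists_thetaFun_div_le_rpow {ε : ℝ} (hε : 0 < ε) :
    ∃ C, 0 < C ∧ ∀ u, 0 < u → u ≤ 1 → thetaFun u / u ≤ C * u ^ (-(1 / 2) - ε) := by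
  refine ⟨(1 / (2 / 3 * ε)) ^ (3 / 2 : ℝ), by positivity, fun u h0 h1 => ?_⟩
  have hlog : log (1 / u) ^ (3 / 2 : ℝ) ≤ (1 / (2 / 3 * ε)) ^ (3 / 2 : ℝ) * u ^ (-ε) :=
    calc log (1 / u) ^ (3 / 2 : ℝ)
        ≤ ((1 / u) ^ (2 / 3 * ε) / (2 / 3 * ε)) ^ (3 / 2 : ℝ) :=
          rpow_le_rpow (log_one_div_nonneg h0 h1)
            (log_le_rpow_div (by positivity) (by positivity)) (by norm_num)
      _ = (1 / (2 / 3 * ε)) ^ (3 / 2 : ℝ) * u ^ (-ε) := by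
          rw [div_eq_mul_one_div, mul_rpow (by positivity) (by positivity),
            ← rpow_mul (by positivity), one_div u, inv_rpow h0.le, ← rpow_neg h0.le, mul_comm]
          ring_nf
  calc thetaFun u / u = u ^ (-(1 / 2) : ℝ) * log (1 / u) ^ (3 / 2 : ℝ) := by
        rw [thetaFun, mul_div_right_comm, sqrt_eq_rpow, ← rpow_sub_one h0.ne']
        norm_num
    _ ≤ u ^ (-(1 / 2) : ℝ) * ((1 / (2 / 3 * ε)) ^ (3 / 2 : ℝ) * u ^ (-ε)) := by gcongr
    _ = (1 / (2 / 3 * ε)) ^ (3 / 2 : ℝ) * u ^ (-(1 / 2) - ε) := by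
        rw [sub_eq_add_neg, rpow_add h0]
        ring

theorem exists_norm_thetaFun_div_le :
    ∃ C, 0 < C ∧ ∀ u, 0 < u → u ≤ 1 → ‖thetaFun u / u‖ ≤ C * u ^ (-(3 / 4) : ℝ) := by
  obtain ⟨C, hC, hle⟩ := exists_thetaFun_div_le_rpow (ε := 1 / 4) (by norm_num)
  refine ⟨C, hC, fun u h0 h1 => ?_⟩
  rw [norm_of_nonneg (div_nonneg (thetaFun_nonneg h0 h1) h0.le)]
  simpa only [show (-(1 / 2) - 1 / 4 : ℝ) = -(3 / 4) by norm_num] using hle u h0 h1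

/-- The inner integral `∫₀^s θ(τ) dτ/τ` in the definition of `σ`. -/
def thetaPrimitive (s : ℝ) : ℝ := ∫ τ in (0 : ℝ)..s, thetaFun τ / τ

theorem thetaPrimitive_nonneg {s : ℝ} (h0 : 0 ≤ s) (h1 : s ≤ 1) : 0 ≤ thetaPrimitive s :=
  intervalIntegral_nonneg_of_Ioc h0 fun _ hu =>
    div_nonneg (thetaFun_nonneg hu.1 (hu.2.trans h1)) hu.1.le

theorem exists_thetaPrimitive_le_rpow :
    ∃ C, 0 < C ∧ ∀ s, 0 ≤ s → s ≤ 1 → thetaPrimitive s ≤ C * s ^ (1 / 4 : ℝ) := by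
  obtain ⟨C, hC, hle⟩ := exists_norm_thetaFun_div_le
  refine ⟨C / (-(3 / 4) + 1), by norm_num [hC], fun s h0 h1 => ?_⟩
  have := norm_intervalIntegral_le_of_norm_le_rpow (by norm_num) h0
    fun u hu => hle u hu.1 (hu.2.trans h1)
  rw [show (1 / 4 : ℝ) = -(3 / 4) + 1 by norm_num]
  exact (le_norm_self _).trans this

theorem continuousOn_thetaPrimitive : ContinuousOn thetaPrimitive (Icc 0 1) := by
  obtain ⟨C, -, hle⟩ := exists_norm_thetaFun_div_le
  have hint : IntegrableOn (fun τ => thetaFun τ / τ) (Icc 0 1) := by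
    rw [integrableOn_Icc_iff_integrableOn_Ioo]
    exact integrableOn_Ioo_of_norm_le_rpow (by norm_num)
      (measurable_thetaFun.div measurable_id).aestronglyMeasurable
      fun u hu => hle u hu.1 hu.2.le
  rw [← uIcc_of_le zero_le_one] at hint ⊢
  exact intervalIntegral.continuousOn_primitive_interval hint

end Theta

section Sigma

/-- The outer integrand `(1 - exp(-∫₀^s θ(τ) dτ/τ)) / s` in the definition of `σ`, so that
`σ(t) = t · exp(-∫₀^{λt} sigmaRate)`. -/
def sigmaRate (s : ℝ) : ℝ := (1 - exp (-thetaPrimitive s)) / s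

theorem sigmaFun_eq (l t : ℝ) :
    sigmaFun l t = t * exp (-∫ s in (0 : ℝ)..(l * t), sigmaRate s) := rfl

theorem sigmaRate_nonneg {s : ℝ} (h0 : 0 < s) (h1 : s ≤ 1) : 0 ≤ sigmaRate s :=
  div_nonneg (sub_nonneg.2 (exp_le_one_iff.2 (neg_nonpos.2 (thetaPrimitive_nonneg h0.le h1)))) h0.le

theorem exists_norm_sigmaRate_le :
    ∃ C, 0 < C ∧ ∀ s, 0 < s → s ≤ 1 → ‖sigmaRate s‖ ≤ C * s ^ (-(3 / 4) : ℝ) := by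
  obtain ⟨C, hC, hle⟩ := exists_thetaPrimitive_le_rpow
  refine ⟨C, hC, fun s h0 h1 => ?_⟩
  rw [norm_of_nonneg (sigmaRate_nonneg h0 h1)]
  calc sigmaRate s ≤ thetaPrimitive s / s := by
        have := one_sub_le_exp_neg (thetaPrimitive s)
        exact div_le_div_of_nonneg_right (by linarith) h0.le
    _ ≤ C * s ^ (1 / 4 : ℝ) / s := by gcongr; exact hle s h0.le h1
    _ = C * s ^ (-(3 / 4) : ℝ) := by
        rw [mul_div_assoc, ← rpow_sub_one h0.ne']
        norm_num

theorem integrableOn_sigmaRate : IntegrableOn sigmaRate (Icc 0 1) := by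
  obtain ⟨C, -, hle⟩ := exists_norm_sigmaRate_le
  have hcont : ContinuousOn sigmaRate (Ioo 0 1) := by
    have := continuousOn_thetaPrimitive.mono Ioo_subset_Icc_self
    exact ContinuousOn.div (by fun_prop) continuousOn_id fun s hs => hs.1.ne'
  rw [integrableOn_Icc_iff_integrableOn_Ioo]
  exact integrableOn_Ioo_of_norm_le_rpow (by norm_num)
    (hcont.aestronglyMeasurable measurableSet_Ioo) fun s hs => hle s hs.1 hs.2.le

variable {l t : ℝ}

theorem continuousOn_sigmaFun (hl : 0 < l) : ContinuousOn (sigmaFun l) (Icc 0 (1 / l)) := by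
  have hprim : ContinuousOn (fun x => ∫ s in (0 : ℝ)..x, sigmaRate s) (Icc 0 1) := by
    have hint := integrableOn_sigmaRate
    rw [← uIcc_of_le zero_le_one] at hint ⊢
    exact intervalIntegral.continuousOn_primitive_interval hint
  have hcomp : ContinuousOn (fun t => ∫ s in (0 : ℝ)..(l * t), sigmaRate s) (Icc 0 (1 / l)) :=
    hprim.comp (by fun_prop) fun t ht => ⟨mul_nonneg hl.le ht.1, (le_div_iff₀' hl).1 ht.2⟩
  simp only [funext (sigmaFun_eq l)]
  fun_prop

theorem sigmaFun_le_self (ht : 0 ≤ t) (h0 : 0 ≤ l * t) (h1 : l * t ≤ 1) : sigmaFun l t ≤ t := by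
  have := intervalIntegral_nonneg_of_Ioc h0 fun s hs => sigmaRate_nonneg hs.1 (hs.2.trans h1)
  exact mul_le_of_le_one_right ht (exp_le_one_iff.2 (neg_nonpos.2 this))

theorem exists_mul_exp_neg_le_sigmaFun :
    ∃ N, 0 < N ∧ ∀ l t, 0 ≤ t → 0 ≤ l * t → l * t ≤ 1 → t * exp (-N) ≤ sigmaFun l t := by
  obtain ⟨C, hC, hle⟩ := exists_norm_sigmaRate_le
  have hC4 : 0 < C / (-(3 / 4) + 1) := div_pos hC (by norm_num)
  refine ⟨C / (-(3 / 4) + 1), hC4, fun l t ht h0 h1 => ?_⟩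
  rw [sigmaFun_eq]
  gcongr
  calc ∫ s in (0 : ℝ)..(l * t), sigmaRate s ≤ C / (-(3 / 4) + 1) * (l * t) ^ (-(3 / 4) + 1 : ℝ) :=
        (le_norm_self _).trans <| norm_intervalIntegral_le_of_norm_le_rpow (by norm_num) h0
          fun s hs => hle s hs.1 (hs.2.trans h1)
    _ ≤ C / (-(3 / 4) + 1) :=
        mul_le_of_le_one_right hC4.le (rpow_le_one h0 h1 (by norm_num))

theorem sigmaFun_pos (l : ℝ) (ht : 0 < t) : 0 < sigmaFun l t := mul_pos ht (exp_pos _)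

theorem rpow_neg_le_sigmaFun_rpow_neg (ht : 0 < t) (h0 : 0 ≤ l * t) (h1 : l * t ≤ 1) {β : ℝ}
    (hβ : 0 ≤ β) : t ^ (-β) ≤ sigmaFun l t ^ (-β) :=
  rpow_le_rpow_of_nonpos (sigmaFun_pos l ht) (sigmaFun_le_self ht.le h0 h1) (neg_nonpos.2 hβ)

theorem exists_sigmaFun_rpow_neg_le :
    ∃ N, 0 < N ∧ ∀ l t β, 0 < t → 0 ≤ l * t → l * t ≤ 1 → 0 ≤ β →
      sigmaFun l t ^ (-β) ≤ exp (β * N) * t ^ (-β) := by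
  obtain ⟨N, hN, hle⟩ := exists_mul_exp_neg_le_sigmaFun
  refine ⟨N, hN, fun l t β ht h0 h1 hβ => ?_⟩
  calc sigmaFun l t ^ (-β) ≤ (t * exp (-N)) ^ (-β) :=
        rpow_le_rpow_of_nonpos (by positivity) (hle l t ht.le h0 h1) (neg_nonpos.2 hβ)
    _ = exp (β * N) * t ^ (-β) := by
        rw [mul_rpow ht.le (exp_pos _).le, ← exp_mul, mul_comm, neg_mul_neg, mul_comm N]

end Sigma

section Gaussian

theorem Gfun_nonneg {n : ℕ} (x : En n) {t : ℝ} (ht : 0 ≤ t) : 0 ≤ Gfun n x t :=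
  mul_nonneg (rpow_nonneg ht _) (exp_pos _).le

theorem continuous_Gfun (n : ℕ) (t : ℝ) : Continuous fun x : En n => Gfun n x t := by
  unfold Gfun
  fun_prop

theorem measurable_Gfun (n : ℕ) : Measurable fun p : ℝ × En n => Gfun n p.2 p.1 := by
  unfold Gfun
  fun_prop

theorem Gfun_sqrt_smul {n : ℕ} {t : ℝ} (ht : 0 < t) (y : En n) :
    Gfun n (√t • y) t = (√t ^ n)⁻¹ * exp (-‖y‖ ^ 2 / 4) := by
  have hpow : t ^ (-(n : ℝ) / 2) = (√t ^ n)⁻¹ := by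
    rw [sqrt_eq_rpow, ← rpow_natCast, ← rpow_mul ht.le, ← rpow_neg ht.le]
    ring_nf
  have hexp : -‖√t • y‖ ^ 2 / (4 * t) = -‖y‖ ^ 2 / 4 := by
    rw [norm_smul, norm_of_nonneg (sqrt_nonneg t), mul_pow, sq_sqrt ht.le]
    field_simp
  rw [Gfun, hpow, hexp]

end Gaussian

section PointwiseBound

/-- The spatial weight `|x|/t + |x|³/(αt²) + |x|²/(δt)` as a function of `r = |x|`. -/
def radialWeight (α δ r t : ℝ) : ℝ := r / t + r ^ 3 / (α * t ^ 2) + r ^ 2 / (δ * t)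

theorem radialWeight_nonneg {α δ r t : ℝ} (hα : 0 ≤ α) (hδ : 0 ≤ δ) (hr : 0 ≤ r) (ht : 0 ≤ t) :
    0 ≤ radialWeight α δ r t := by
  unfold radialWeight
  positivity

variable {α δ l t : ℝ}

theorem sqrt_mul_eq_div (hδ : 0 ≤ δ) (hα : 0 ≤ α) (hl : l = α / δ ^ 2) :
    √(l * t) = √α * √t / δ := by
  rw [hl, sqrt_mul (by positivity), sqrt_div hα, sqrt_sq hδ, div_mul_eq_mul_div]

theorem mul_thetaFun_div_eq (hα : 0 < α) (hδ : 0 < δ) (hl : l = α / δ ^ 2) (ht : 0 < t)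
    (h1 : l * t ≤ 1) :
    δ * (thetaFun (l * t) / t) = √α * √(log (1 / (l * t))) ^ 3 / √t := by
  have h0 : 0 < l * t := by rw [hl]; positivity
  have hlog : log (1 / (l * t)) ^ (3 / 2 : ℝ) = √(log (1 / (l * t))) ^ 3 := by
    rw [sqrt_eq_rpow, ← rpow_natCast, ← rpow_mul (log_one_div_nonneg h0 h1)]
    norm_num
  rw [thetaFun, hlog, sqrt_mul_eq_div hδ.le hα.le hl]
  field_simp
  rw [sq_sqrt ht.le]

theorem half_le_log_one_div {u : ℝ} (h0 : 0 < u) (h1 : u ≤ 1 / 2) : 1 / 2 ≤ log (1 / u) :=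
  calc 1 / 2 ≤ log 2 := by linarith [log_two_gt_d9]
    _ ≤ log (1 / u) := log_le_log two_pos (by rw [le_div_iff₀ h0]; linarith)

theorem radialWeight_le_mul_thetaFun_div {k r : ℝ} (hk : 0 ≤ k) (hα : 0 < α) (hδ : 0 < δ)
    (hl : l = α / δ ^ 2) (ht : 0 < t) (h1 : l * t ≤ 1 / 2) (hr0 : 0 ≤ r)
    (hr : r ≤ k * (√α * √t * √(log (1 / (l * t))))) :
    radialWeight α δ r t ≤ (2 * k + k ^ 3 + k ^ 2) * (δ * (thetaFun (l * t) / t)) := by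
  have h0 : 0 < l * t := by rw [hl]; positivity
  have hlog := half_le_log_one_div h0 h1
  have hm : 1 / 2 ≤ √(log (1 / (l * t))) ^ 2 := by rwa [sq_sqrt (by linarith)]
  have haτ : √α * √t / δ ≤ √(log (1 / (l * t))) := by
    rw [← sqrt_mul_eq_div hδ.le hα.le hl]
    exact sqrt_le_sqrt (h1.trans hlog)
  rw [mul_thetaFun_div_eq hα hδ hl ht (by linarith), radialWeight]
  have hm0 := sqrt_nonneg (log (1 / (l * t)))
  have ha0 := sqrt_pos.2 hα
  have hτ0 := sqrt_pos.2 ht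
  have hα2 := sq_sqrt hα.le
  have hτ2 := sq_sqrt ht.le
  set m := √(log (1 / (l * t)))
  set τ := √t
  set a := √α
  have hlinear : r / τ ^ 2 ≤ 2 * k * (a * m ^ 3 / τ) :=
    calc r / τ ^ 2 ≤ k * (a * τ * m) * 1 / τ ^ 2 := by gcongr; linarith
      _ ≤ k * (a * τ * m) * (2 * m ^ 2) / τ ^ 2 := by gcongr; linarith
      _ = 2 * k * (a * m ^ 3 / τ) := by field_simp
  have hcubic : r ^ 3 / (a ^ 2 * (τ ^ 2) ^ 2) ≤ k ^ 3 * (a * m ^ 3 / τ) :=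
    calc r ^ 3 / (a ^ 2 * (τ ^ 2) ^ 2) ≤ (k * (a * τ * m)) ^ 3 / (a ^ 2 * (τ ^ 2) ^ 2) := by gcongr
      _ = k ^ 3 * (a * m ^ 3 / τ) := by field_simp
  have hquadratic : r ^ 2 / (δ * τ ^ 2) ≤ k ^ 2 * (a * m ^ 3 / τ) :=
    calc r ^ 2 / (δ * τ ^ 2) ≤ (k * (a * τ * m)) ^ 2 / (δ * τ ^ 2) := by gcongr
      _ = k ^ 2 * (a * m ^ 2 / τ) * (a * τ / δ) := by field_simp
      _ ≤ k ^ 2 * (a * m ^ 2 / τ) * m := by gcongr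
      _ = k ^ 2 * (a * m ^ 3 / τ) := by ring
  rw [hτ2] at hlinear hquadratic
  rw [hα2, hτ2] at hcubic
  linarith

theorem radialWeight_mul_sqrt_le {ρ : ℝ} (hα : 1 ≤ α) (ht : 0 < t) (hδ : √t ≤ δ) (hρ : 0 ≤ ρ) :
    radialWeight α δ (ρ * √t) t ≤ (ρ + ρ ^ 2 + ρ ^ 3) * (√t)⁻¹ := by
  have hτ : 0 < √t := sqrt_pos.2 ht
  have hδ0 : 0 < δ := hτ.trans_le hδ
  calc radialWeight α δ (ρ * √t) t
      = ρ * (√t)⁻¹ + ρ ^ 3 * (√t)⁻¹ * α⁻¹ + ρ ^ 2 * δ⁻¹ := by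
        unfold radialWeight
        nth_rewrite 2 4 6 [← sq_sqrt ht.le]
        field_simp
    _ ≤ ρ * (√t)⁻¹ + ρ ^ 3 * (√t)⁻¹ * 1 + ρ ^ 2 * (√t)⁻¹ := by
        gcongr
        exact inv_le_one_of_one_le₀ hα
    _ = (ρ + ρ ^ 2 + ρ ^ 3) * (√t)⁻¹ := by ring

theorem add_sq_add_cube_le_exp (ρ : ℝ) : ρ + ρ ^ 2 + ρ ^ 3 ≤ 64 * exp (ρ ^ 2 / 8) := by
  have := quadratic_le_exp_of_nonneg (x := ρ ^ 2 / 8) (by positivity)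
  nlinarith [sq_nonneg (ρ ^ 2 - ρ), sq_nonneg (ρ - 1)]

theorem exp_neg_le_rpow {u q s : ℝ} (hu : 0 < u) (hs : q * log (1 / u) ≤ s) :
    exp (-s) ≤ u ^ q := by
  rw [rpow_def_of_pos hu, exp_le_exp]
  rw [one_div, log_inv] at hs
  linarith

theorem exp_neg_sq_div_eight_le_rpow {u ρ : ℝ} (n : ℕ) (hα : 1 ≤ α) (h0 : 0 < u) (h1 : u ≤ 1)
    (hρ : (n + 5) * (√α * √(log (1 / u))) ≤ ρ) :
    exp (-(ρ ^ 2 / 8)) ≤ u ^ (2 * α + n / 2 + 1 / 2) := by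
  have hlog := log_one_div_nonneg h0 h1
  have hn : (0 : ℝ) ≤ n := n.cast_nonneg
  have hsq : (n + 5) ^ 2 * (α * log (1 / u)) ≤ ρ ^ 2 :=
    calc (n + 5) ^ 2 * (α * log (1 / u))
        = ((n + 5) * (√α * √(log (1 / u)))) ^ 2 := by
          rw [mul_pow, mul_pow, sq_sqrt (by linarith), sq_sqrt hlog]
      _ ≤ ρ ^ 2 := by gcongr
  have hexponent : 2 * α + n / 2 + 1 / 2 ≤ (n + 5) ^ 2 / 8 * α := by
    nlinarith [mul_nonneg hn (sub_nonneg.2 hα)]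
  exact exp_neg_le_rpow h0 (by nlinarith [mul_le_mul_of_nonneg_right hexponent hlog])

theorem rpow_mul_radialWeight_mul_Gfun_le {n : ℕ} (hα : 1 ≤ α) (hδ : 0 < δ) (hl : l = α / δ ^ 2)
    (ht : 0 < t) (h1 : l * t ≤ 1) (x : En n)
    (hx : (n + 5) * (√α * √t * √(log (1 / (l * t)))) ≤ ‖x‖) :
    t ^ (-(2 * α)) * radialWeight α δ ‖x‖ t * Gfun n x t ≤ 64 * l ^ (2 * α + n / 2 + 1 / 2) := by
  have hl0 : 0 < l := by rw [hl]; positivity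
  have h0 : 0 < l * t := by positivity
  have hτ : 0 < √t := sqrt_pos.2 ht
  have hτδ : √t ≤ δ := by
    refine (sqrt_le_left hδ.le).2 (le_of_mul_le_mul_left (?_ : l * t ≤ l * δ ^ 2) hl0)
    rw [hl, div_mul_cancel₀ _ (by positivity), ← hl]
    exact h1.trans hα
  obtain ⟨y, rfl⟩ : ∃ y, x = √t • y := ⟨(√t)⁻¹ • x, (smul_inv_smul₀ hτ.ne' x).symm⟩
  rw [norm_smul, norm_of_nonneg hτ.le, mul_comm √t] at hx ⊢
  have hy : (n + 5) * (√α * √(log (1 / (l * t)))) ≤ ‖y‖ :=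
    le_of_mul_le_mul_right (by linarith) hτ
  have hdecay := exp_neg_sq_div_eight_le_rpow n hα h0 h1 hy
  calc t ^ (-(2 * α)) * radialWeight α δ (‖y‖ * √t) t * Gfun n (√t • y) t
      ≤ t ^ (-(2 * α)) * (64 * exp (‖y‖ ^ 2 / 8) * (√t)⁻¹) *
          ((√t ^ n)⁻¹ * (exp (-(‖y‖ ^ 2 / 8)) * (l * t) ^ (2 * α + n / 2 + 1 / 2))) := by
        rw [Gfun_sqrt_smul ht, show -‖y‖ ^ 2 / 4 = -(‖y‖ ^ 2 / 8) + -(‖y‖ ^ 2 / 8) by ring, exp_add]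
        gcongr
        exact (radialWeight_mul_sqrt_le hα ht hτδ (norm_nonneg y)).trans
          (by gcongr; exact add_sq_add_cube_le_exp ‖y‖)
    _ = 64 * (exp (‖y‖ ^ 2 / 8) * exp (-(‖y‖ ^ 2 / 8))) *
          (t ^ (-(2 * α)) * (√t ^ (n + 1))⁻¹ * t ^ (2 * α + n / 2 + 1 / 2)) *
            l ^ (2 * α + n / 2 + 1 / 2) := by
        rw [mul_rpow hl0.le ht.le, pow_succ (√t) n, mul_inv]
        ring
    _ = 64 * l ^ (2 * α + n / 2 + 1 / 2) := by
        rw [← exp_add, add_neg_cancel, exp_zero, sqrt_eq_rpow, ← rpow_natCast, ← rpow_mul ht.le,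
          ← rpow_neg ht.le, ← rpow_add ht, ← rpow_add ht]
        push_cast
        ring_nf
        simp

theorem sigmaFun_rpow_mul_radialWeight_mul_Gfun_le_of_norm_le {n : ℕ} {k : ℝ} (hk : 0 ≤ k)
    (hα : 0 < α) (hδ : 0 < δ) (hl : l = α / δ ^ 2) (ht : 0 < t) (h1 : l * t ≤ 1 / 2) (x : En n)
    (hx : ‖x‖ ≤ k * (√α * √t * √(log (1 / (l * t))))) :
    sigmaFun l t ^ (-(2 * α)) * radialWeight α δ ‖x‖ t * Gfun n x t ≤
      (2 * k + k ^ 3 + k ^ 2) * δ *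
        (sigmaFun l t ^ (-(2 * α)) * (thetaFun (l * t) / t) * Gfun n x t) := by
  have hσ := sigmaFun_pos l ht
  have hG := Gfun_nonneg x ht.le
  calc sigmaFun l t ^ (-(2 * α)) * radialWeight α δ ‖x‖ t * Gfun n x t
      ≤ sigmaFun l t ^ (-(2 * α)) *
          ((2 * k + k ^ 3 + k ^ 2) * (δ * (thetaFun (l * t) / t))) * Gfun n x t := by
        gcongr
        exact radialWeight_le_mul_thetaFun_div hk hα hδ hl ht h1 (norm_nonneg x) hx
    _ = (2 * k + k ^ 3 + k ^ 2) * δ *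
          (sigmaFun l t ^ (-(2 * α)) * (thetaFun (l * t) / t) * Gfun n x t) := by ring

theorem exists_sigmaFun_rpow_mul_radialWeight_mul_Gfun_le_of_le_norm (n : ℕ) :
    ∃ N, 0 < N ∧ ∀ α δ l t, 1 ≤ α → 0 < δ → l = α / δ ^ 2 → 0 < t → l * t ≤ 1 → ∀ x : En n,
      (n + 5) * (√α * √t * √(log (1 / (l * t)))) ≤ ‖x‖ →
      sigmaFun l t ^ (-(2 * α)) * radialWeight α δ ‖x‖ t * Gfun n x t ≤
        64 * exp (2 * α * N) * l ^ (2 * α + n / 2 + 1 / 2) := by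
  obtain ⟨N, hN, hσ⟩ := exists_sigmaFun_rpow_neg_le
  refine ⟨N, hN, fun α δ l t hα hδ hl ht hlt x hx => ?_⟩
  have hlt0 : 0 ≤ l * t := by rw [hl]; positivity
  have hW := radialWeight_nonneg (zero_le_one.trans hα) hδ.le (norm_nonneg x) ht.le
  have hG := Gfun_nonneg x ht.le
  calc sigmaFun l t ^ (-(2 * α)) * radialWeight α δ ‖x‖ t * Gfun n x t
      ≤ exp (2 * α * N) * t ^ (-(2 * α)) * radialWeight α δ ‖x‖ t * Gfun n x t := by
        gcongr
        exact hσ l t (2 * α) ht hlt0 hlt (by linarith)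
    _ = exp (2 * α * N) * (t ^ (-(2 * α)) * radialWeight α δ ‖x‖ t * Gfun n x t) := by ring
    _ ≤ exp (2 * α * N) * (64 * l ^ (2 * α + n / 2 + 1 / 2)) :=
        mul_le_mul_of_nonneg_left
          (rpow_mul_radialWeight_mul_Gfun_le hα hδ hl ht hlt x hx) (exp_pos _).le
    _ = 64 * exp (2 * α * N) * l ^ (2 * α + n / 2 + 1 / 2) := by ring

theorem one_le_of_eq_div_sq (hα : 1 ≤ α) (hδ : 0 < δ) (hδ1 : δ ≤ 1) (hl : l = α / δ ^ 2) :
    1 ≤ l := by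
  rw [hl, one_le_div (by positivity)]
  exact (pow_le_one₀ hδ.le hδ1).trans hα

theorem exists_sigmaFun_rpow_mul_radialWeight_mul_Gfun_le (n : ℕ) :
    ∃ N, 0 < N ∧ ∀ α δ l t, 1 ≤ α → 0 < δ → δ ≤ 1 → l = α / δ ^ 2 → 0 < t → l * t ≤ 1 / 2 →
      ∀ x : En n,
      sigmaFun l t ^ (-(2 * α)) * radialWeight α δ ‖x‖ t * Gfun n x t ≤
        N * exp (2 * α * N) * l ^ (2 * α + N) +
          N * δ * (sigmaFun l t ^ (-(2 * α)) * (thetaFun (l * t) / t) * Gfun n x t) := by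
  obtain ⟨N₀, hN₀, hfar⟩ := exists_sigmaFun_rpow_mul_radialWeight_mul_Gfun_le_of_le_norm n
  set k : ℝ := n + 5
  have hk : 0 ≤ k := by positivity
  obtain ⟨N, hN₀N, h64N, hkN, hnN⟩ : ∃ N, N₀ ≤ N ∧ 64 ≤ N ∧ 2 * k + k ^ 3 + k ^ 2 ≤ N ∧
      n / 2 + 1 / 2 ≤ N :=
    ⟨max N₀ (max 64 (max (2 * k + k ^ 3 + k ^ 2) (n / 2 + 1 / 2))), by simp⟩
  have hN : 0 < N := hN₀.trans_le hN₀N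
  refine ⟨N, hN, fun α δ l t hα hδ hδ1 hl ht hlt x => ?_⟩
  have hα0 : 0 < α := zero_lt_one.trans_le hα
  have hl1 := one_le_of_eq_div_sq hα hδ hδ1 hl
  have hσ := sigmaFun_pos l ht
  have hθ := thetaFun_nonneg (by positivity : 0 < l * t) (by linarith)
  have hG := Gfun_nonneg x ht.le
  rcases le_total ‖x‖ (k * (√α * √t * √(log (1 / (l * t))))) with hx | hx
  · refine le_add_of_nonneg_of_le (by positivity) ?_
    exact (sigmaFun_rpow_mul_radialWeight_mul_Gfun_le_of_norm_le hk hα0 hδ hl ht hlt x hx).trans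
      (by gcongr)
  · refine le_add_of_le_of_nonneg ?_ (by positivity)
    calc sigmaFun l t ^ (-(2 * α)) * radialWeight α δ ‖x‖ t * Gfun n x t
        ≤ 64 * exp (2 * α * N₀) * l ^ (2 * α + n / 2 + 1 / 2) :=
          hfar α δ l t hα hδ hl ht (by linarith) x hx
      _ ≤ N * exp (2 * α * N) * l ^ (2 * α + N) := by
          gcongr ?_ * exp (2 * α * ?_) * l ^ ?_
          linarith

theorem exists_sigmaFun_rpow_add_mul_radialWeight_mul_Gfun_le (n : ℕ) :
    ∃ N, 0 < N ∧ ∀ α δ l t p, 1 ≤ α → 0 < δ → δ ≤ 1 → l = α / δ ^ 2 → 0 < t → l * t ≤ 1 / 2 →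
      0 ≤ p → ∀ x : En n,
      sigmaFun l t ^ (-(2 * α) + p) * radialWeight α δ ‖x‖ t * Gfun n x t ≤
        N * exp (2 * α * N) * l ^ (2 * α + N) * t ^ p +
          N * δ * (sigmaFun l t ^ (-(2 * α) + p) * (thetaFun (l * t) / t) * Gfun n x t) := by
  obtain ⟨N, hN, hpointwise⟩ := exists_sigmaFun_rpow_mul_radialWeight_mul_Gfun_le n
  refine ⟨N, hN, fun α δ l t p hα hδ hδ1 hl ht hlt hp x => ?_⟩
  have hl0 : 0 < l := by rw [hl]; positivity
  have hσ0 := sigmaFun_pos l ht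
  have hσt : sigmaFun l t ^ p ≤ t ^ p :=
    rpow_le_rpow hσ0.le (sigmaFun_le_self ht.le (by positivity) (by linarith)) hp
  have hscaled := mul_le_mul_of_nonneg_right (hpointwise α δ l t hα hδ hδ1 hl ht hlt x)
    (rpow_nonneg hσ0.le p)
  have hfirst := mul_le_mul_of_nonneg_left hσt
    (by positivity : 0 ≤ N * exp (2 * α * N) * l ^ (2 * α + N))
  rw [rpow_add hσ0]
  linarith

end PointwiseBound

section Taylor

open Filter Topology

variable {F : Type*} [NormedAddCommGroup F] [NormedSpace ℝ F] {g : ℝ → F}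

theorem exists_eventually_mul_pow_le_norm {j : ℕ} (hg : ContDiff ℝ j g)
    (hzero : ∀ i < j, iteratedDeriv i g 0 = 0) (hne : iteratedDeriv j g 0 ≠ 0) :
    ∃ c, 0 < c ∧ ∀ᶠ s in 𝓝[>] 0, c * s ^ j ≤ ‖g s‖ := by
  set a := ((j.factorial : ℝ)⁻¹) • iteratedDeriv j g 0 with ha
  have ha0 : 0 < ‖a‖ := norm_pos_iff.2 (smul_ne_zero (by positivity) hne)
  have htaylor (s : ℝ) : taylorWithinEval g j univ 0 s = s ^ j • a := by
    rw [taylor_within_apply, Finset.sum_range_succ, Finset.sum_eq_zero, zero_add, sub_zero,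
      iteratedDerivWithin_univ, ha, smul_smul, mul_comm]
    intro i hi
    rw [iteratedDerivWithin_univ, hzero i (Finset.mem_range.1 hi), smul_zero]
  have hlittle := (taylor_isLittleO_univ (x₀ := 0) hg).def (half_pos ha0)
  refine ⟨‖a‖ / 2, half_pos ha0, ?_⟩
  filter_upwards [hlittle.filter_mono nhdsWithin_le_nhds, self_mem_nhdsWithin] with s hs hs0
  have hsj : 0 ≤ s ^ j := pow_nonneg (mem_Ioi.1 hs0).le j
  rw [htaylor, sub_zero, norm_of_nonneg hsj] at hs
  have hle := norm_le_norm_add_norm_sub (g s) (s ^ j • a)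
  rw [norm_smul, norm_of_nonneg hsj] at hle
  linarith

theorem iteratedDeriv_eq_zero_of_integrableOn {b γ : ℝ} (hb : 0 < b) {m : ℕ} (hg : ContDiff ℝ m g)
    (hm : m ≤ γ) (hint : IntegrableOn (fun t => t ^ (-γ) * ‖g √t‖ ^ 2) (Ioo 0 b)) :
    ∀ j < m, iteratedDeriv j g 0 = 0 := by
  intro j
  induction j using Nat.strong_induction_on with
  | _ j ih =>
  intro hj
  by_contra hne
  obtain ⟨c, hc, hlower⟩ := exists_eventually_mul_pow_le_norm (hg.of_le (by exact_mod_cast hj.le))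
    (fun i hi => ih i hi (hi.trans hj)) hne
  have hsqrt : Tendsto sqrt (𝓝[>] 0) (𝓝[>] 0) := by
    refine tendsto_nhdsWithin_iff.2 ⟨?_, eventually_mem_nhdsWithin.mono fun t ht => sqrt_pos.2 ht⟩
    simpa using continuous_sqrt.continuousWithinAt.tendsto (x := 0) (s := Ioi 0)
  obtain ⟨ε, hε, hlower⟩ := mem_nhdsGT_iff_exists_Ioo_subset.1 (hsqrt.eventually hlower)
  have hpow : IntegrableOn (fun t : ℝ => t ^ ((j : ℝ) - γ)) (Ioo 0 (min b ε)) := by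
    refine Integrable.mono' ((hint.mono_set (Ioo_subset_Ioo_right (min_le_left b ε))).const_mul
      (c ^ 2)⁻¹) (by fun_prop) ?_
    filter_upwards [ae_restrict_mem measurableSet_Ioo] with t ht
    have ht0 : 0 < t := ht.1
    have hg : c * √t ^ j ≤ ‖g √t‖ := hlower ⟨ht0, ht.2.trans_le (min_le_right b ε)⟩
    rw [norm_of_nonneg (rpow_nonneg ht0.le _)]
    calc t ^ ((j : ℝ) - γ) = (c ^ 2)⁻¹ * (t ^ (-γ) * (c * √t ^ j) ^ 2) := by
          rw [mul_pow, ← pow_mul, mul_comm j, pow_mul, sq_sqrt ht0.le, sub_eq_neg_add,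
            rpow_add ht0, rpow_natCast]
          field_simp
      _ ≤ (c ^ 2)⁻¹ * (t ^ (-γ) * ‖g √t‖ ^ 2) := by gcongr
  rw [intervalIntegral.integrableOn_Ioo_rpow_iff (lt_min hb hε)] at hpow
  have : (j : ℝ) + 1 ≤ m := by exact_mod_cast hj
  linarith

theorem norm_le_mul_pow_of_iteratedDeriv_eq_zero {m : ℕ} (hg : ContDiff ℝ m g) {D : ℝ}
    (hD : ∀ s ∈ Icc (0 : ℝ) 1, ‖iteratedDeriv m g s‖ ≤ D)
    (hzero : ∀ j < m, iteratedDeriv j g 0 = 0) {s : ℝ} (hs : s ∈ Icc (0 : ℝ) 1) :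
    ‖g s‖ ≤ D * s ^ m := by
  cases m with
  | zero => simpa using hD s hs
  | succ k =>
    have hD0 : 0 ≤ D := (norm_nonneg _).trans (hD s hs)
    have hwithin {i : ℕ} (hi : i ≤ k + 1) {x : ℝ} (hx : x ∈ Icc (0 : ℝ) 1) :
        iteratedDerivWithin i g (Icc 0 1) x = iteratedDeriv i g x :=
      iteratedDerivWithin_eq_iteratedDeriv (uniqueDiffOn_Icc zero_lt_one)
        (hg.of_le (by exact_mod_cast hi)).contDiffAt hx
    have htaylor : taylorWithinEval g k (Icc 0 1) 0 s = 0 := by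
      rw [taylor_within_apply]
      refine Finset.sum_eq_zero fun i hi => ?_
      have hik : i < k + 1 := Finset.mem_range.1 hi
      rw [hwithin hik.le (left_mem_Icc.2 zero_le_one), hzero i hik, smul_zero]
    have hremainder := taylor_mean_remainder_bound zero_le_one
      (by exact_mod_cast hg.contDiffOn) hs fun x hx => by
        rw [hwithin le_rfl hx]
        exact hD x hx
    rw [htaylor, sub_zero, sub_zero] at hremainder
    exact hremainder.trans (div_le_self (mul_nonneg hD0 (pow_nonneg hs.1 _))
      (by exact_mod_cast k.factorial_pos))

end Taylor

section Parabola

variable {E F : Type*} [NormedAddCommGroup E] [NormedSpace ℝ E] [NormedAddCommGroup F]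
  [NormedSpace ℝ F]

/-- The curve `s ↦ (s y, s²)` in space-time: with `s = √t` it traces the parabola
`t ↦ (√t y, t)` along which the Gaussian kernel is `t^{-n/2} e^{-|y|²/4}`, and it is smooth
up to `t = 0`. -/
def parabolicCurve (y : E) (s : ℝ) : E × ℝ := (s • y, s ^ 2)

theorem parabolicCurve_sqrt (y : E) {t : ℝ} (ht : 0 ≤ t) : parabolicCurve y √t = (√t • y, t) := by
  rw [parabolicCurve, sq_sqrt ht]

theorem contDiff_parabolicCurve (y : E) {m : WithTop ℕ∞} : ContDiff ℝ m (parabolicCurve y) := by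
  unfold parabolicCurve
  fun_prop

theorem deriv_parabolicCurve (y : E) : deriv (parabolicCurve y) = fun s => (y, 2 * s) := by
  ext1 s
  have hspace : HasDerivAt (fun s : ℝ => s • y) y s := by
    simpa using (hasDerivAt_id s).smul_const y
  have htime : HasDerivAt (fun s : ℝ => s ^ 2) (2 * s) s := by simpa using hasDerivAt_pow 2 s
  exact (hspace.prodMk htime).deriv

theorem deriv_deriv_parabolicCurve (y : E) :
    deriv (deriv (parabolicCurve y)) = fun _ => (0, 2) := by
  rw [deriv_parabolicCurve]
  ext1 s
  have htime : HasDerivAt (fun s : ℝ => 2 * s) 2 s := by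
    simpa using (hasDerivAt_id s).const_mul 2
  exact ((hasDerivAt_const s y).prodMk htime).deriv

theorem norm_iteratedDeriv_parabolicCurve_le (y : E) {s : ℝ} (hs : s ∈ Icc (0 : ℝ) 1) {i : ℕ}
    (hi : 1 ≤ i) : ‖iteratedDeriv i (parabolicCurve y) s‖ ≤ (‖y‖ + 2) ^ i := by
  have hy := norm_nonneg y
  match i, hi with
  | 1, _ =>
    rw [iteratedDeriv_one, deriv_parabolicCurve, pow_one, Prod.norm_mk, norm_of_nonneg
      (mul_nonneg zero_le_two hs.1)]
    exact max_le (by linarith) (by linarith [hs.2])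
  | 2, _ =>
    rw [iteratedDeriv_succ', iteratedDeriv_one, deriv_deriv_parabolicCurve, Prod.norm_mk,
      norm_zero, norm_of_nonneg zero_le_two]
    exact max_le (by positivity) (by nlinarith)
  | k + 3, _ =>
    rw [iteratedDeriv_succ', iteratedDeriv_succ', iteratedDeriv_succ', deriv_deriv_parabolicCurve,
      deriv_const', iteratedDeriv_const]
    simp only [ite_self, norm_zero]
    positivity

theorem exists_norm_iteratedDeriv_comp_parabolicCurve_le {V : E × ℝ → F} {m : ℕ}
    (hV : ContDiff ℝ m V) (hc : HasCompactSupport V) :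
    ∃ C, ∀ y, ∀ s ∈ Icc (0 : ℝ) 1,
      ‖iteratedDeriv m (V ∘ parabolicCurve y) s‖ ≤ C * (‖y‖ + 2) ^ m := by
  have hbound (i : ℕ) : ∃ B, 0 ≤ B ∧ (i ≤ m → ∀ p, ‖iteratedFDeriv ℝ i V p‖ ≤ B) := by
    by_cases hi : i ≤ m
    · obtain ⟨B, hB⟩ := (hV.continuous_iteratedFDeriv (m := i)
        (by exact_mod_cast hi)).bounded_above_of_compact_support (hc.iteratedFDeriv i)
      exact ⟨B, (norm_nonneg _).trans (hB 0), fun _ => hB⟩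
    · exact ⟨0, le_rfl, fun h => absurd h hi⟩
  choose B hB0 hB using hbound
  refine ⟨m.factorial * ∑ i ∈ Finset.range (m + 1), B i, fun y s hs => ?_⟩
  rw [← norm_iteratedFDeriv_eq_norm_iteratedDeriv]
  refine norm_iteratedFDeriv_comp_le hV (contDiff_parabolicCurve y) le_rfl s
    (fun i hi => (hB i hi _).trans ?_) fun i hi _ => ?_
  · exact Finset.single_le_sum (fun i _ => hB0 i) (Finset.mem_range_succ_iff.2 hi)
  · rw [norm_iteratedFDeriv_eq_norm_iteratedDeriv]
    exact norm_iteratedDeriv_parabolicCurve_le y hs hi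

theorem exists_norm_le_mul_sqrt_pow_of_integrableOn {V : E × ℝ → F} {m : ℕ}
    (hV : ContDiff ℝ m V) (hc : HasCompactSupport V) {b γ : ℝ} (hb : 0 < b) (hm : m ≤ γ) :
    ∃ C, ∀ y,
      IntegrableOn (fun t => t ^ (-γ) * ‖V (√t • y, t)‖ ^ 2) (Ioo 0 b) →
      ∀ t ∈ Icc (0 : ℝ) 1, ‖V (√t • y, t)‖ ≤ C * (‖y‖ + 2) ^ m * √t ^ m := by
  obtain ⟨C, hC⟩ := exists_norm_iteratedDeriv_comp_parabolicCurve_le hV hc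
  refine ⟨C, fun y hint t ht => ?_⟩
  have hcomp : ContDiff ℝ m (V ∘ parabolicCurve y) := hV.comp (contDiff_parabolicCurve y)
  have hint' : IntegrableOn (fun t => t ^ (-γ) * ‖(V ∘ parabolicCurve y) √t‖ ^ 2) (Ioo 0 b) := by
    refine hint.congr_fun (fun t ht => ?_) measurableSet_Ioo
    rw [Function.comp_apply, parabolicCurve_sqrt y ht.1.le]
  have hzero := iteratedDeriv_eq_zero_of_integrableOn hb hcomp hm hint'
  rw [← parabolicCurve_sqrt y ht.1]
  exact norm_le_mul_pow_of_iteratedDeriv_eq_zero hcomp (hC y) hzero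
    ⟨sqrt_nonneg t, sqrt_le_one.2 ht.2⟩

end Parabola

section Slices

variable {X Y F : Type*} [TopologicalSpace X] [TopologicalSpace Y] [NormedAddCommGroup F]
  {V : X × Y → F}

theorem hasCompactSupport_slice [R1Space X] (hc : HasCompactSupport V) (y : Y) :
    HasCompactSupport fun x => V (x, y) := by
  refine HasCompactSupport.intro (hc.isCompact.image continuous_fst) fun x hx => ?_
  by_contra hne
  exact hx ⟨(x, y), subset_tsupport V hne, rfl⟩

variable [R1Space X] [MeasurableSpace X] [OpensMeasurableSpace X] {μ : Measure X}
  [IsFiniteMeasureOnCompacts μ]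

theorem integrable_mul_sq_norm_slice (hV : Continuous V) (hc : HasCompactSupport V) (y : Y)
    {f : X → ℝ} (hf : Continuous f) : Integrable (fun x => f x * ‖V (x, y)‖ ^ 2) μ := by
  have hsupp : HasCompactSupport fun x => ‖V (x, y)‖ ^ 2 :=
    (hasCompactSupport_slice hc y).comp_left (g := fun v => ‖v‖ ^ 2) (by simp)
  exact Continuous.integrable_of_hasCompactSupport (by fun_prop) hsupp.mul_left

end Slices

section GaussianIntegrals

theorem integrable_norm_add_pow_mul_exp_neg_mul_sq_norm {E : Type*} [NormedAddCommGroup E]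
    [InnerProductSpace ℝ E] [FiniteDimensional ℝ E] [MeasurableSpace E] [BorelSpace E]
    {a b : ℝ} (ha : 0 ≤ a) (hb : 0 < b) (m : ℕ) :
    Integrable fun y : E => (‖y‖ + a) ^ m * exp (-b * ‖y‖ ^ 2) := by
  have hgauss : Integrable fun y : E => exp (-(b / 2) * ‖y‖ ^ 2) := by
    refine Integrable.of_integral_ne_zero ?_
    rw [GaussianFourier.integral_rexp_neg_mul_sq_norm (half_pos hb)]
    positivity
  refine Integrable.mono' (hgauss.const_mul (m.factorial * exp (a + 1 / (2 * b)))) (by fun_prop)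
    (.of_forall fun y => ?_)
  have hpow : (‖y‖ + a) ^ m ≤ m.factorial * exp (‖y‖ + a) := by
    have := pow_div_factorial_le_exp (‖y‖ + a) (by positivity) m
    rwa [div_le_iff₀' (by positivity)] at this
  have hsquare : ‖y‖ ≤ 1 / (2 * b) + b / 2 * ‖y‖ ^ 2 := by
    rw [← sub_nonneg]
    have : 1 / (2 * b) + b / 2 * ‖y‖ ^ 2 - ‖y‖ = (b * ‖y‖ - 1) ^ 2 / (2 * b) := by
      field_simp
      ring
    rw [this]
    positivity
  rw [norm_of_nonneg (by positivity)]
  calc (‖y‖ + a) ^ m * exp (-b * ‖y‖ ^ 2)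
      ≤ m.factorial * exp (‖y‖ + a) * exp (-b * ‖y‖ ^ 2) := by gcongr
    _ = m.factorial * exp (‖y‖ + a + -b * ‖y‖ ^ 2) := by rw [exp_add (‖y‖ + a)]; ring
    _ ≤ m.factorial * exp (a + 1 / (2 * b) + -(b / 2) * ‖y‖ ^ 2) :=
        mul_le_mul_of_nonneg_left (exp_le_exp.2 (by linarith)) (by positivity)
    _ = m.factorial * exp (a + 1 / (2 * b)) * exp (-(b / 2) * ‖y‖ ^ 2) := by
        rw [exp_add (a + 1 / (2 * b))]; ring

variable {n : ℕ} {t : ℝ}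

theorem integral_mul_Gfun (ht : 0 < t) (f : En n → ℝ) :
    ∫ x, f x * Gfun n x t = ∫ y, f (√t • y) * exp (-‖y‖ ^ 2 / 4) := by
  have hτ : 0 < √t := sqrt_pos.2 ht
  have hscale := Measure.integral_comp_smul_of_nonneg (volume : Measure (En n))
    (fun x => f x * Gfun n x t) √t (hR := hτ.le)
  simp only [finrank_euclideanSpace_fin, smul_eq_mul, Gfun_sqrt_smul ht,
    mul_left_comm (f _), integral_const_mul] at hscale
  exact (mul_left_cancel₀ (by positivity) hscale).symm

theorem integrable_comp_sqrt_smul_mul_exp (ht : 0 < t) {f : En n → ℝ}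
    (hf : Integrable fun x => f x * Gfun n x t) :
    Integrable fun y => f (√t • y) * exp (-‖y‖ ^ 2 / 4) := by
  have hτ : 0 < √t := sqrt_pos.2 ht
  have hscale := (hf.comp_smul hτ.ne').const_mul (√t ^ n)
  simpa only [Gfun_sqrt_smul ht, mul_left_comm (f _),
    mul_inv_cancel_left₀ (pow_pos hτ n).ne'] using hscale

theorem measurable_integral_mul_Gfun {f : ℝ → En n → ℝ} (hf : Measurable (Function.uncurry f)) :
    Measurable fun t => ∫ x, f t x * Gfun n x t :=
  (StronglyMeasurable.integral_prod_right
    (hf.mul (measurable_Gfun n)).stronglyMeasurable).measurable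

end GaussianIntegrals

section GaussianEnergy

variable {n : ℕ} {F : Type*} [NormedAddCommGroup F] {V : En n × ℝ → F}

/-- The Gaussian energy `∫ |V(x,t)|² G(x,t) dx` of the time slice of `V` at `t`. -/
def gaussianEnergy (V : En n × ℝ → F) (t : ℝ) : ℝ := ∫ x, ‖V (x, t)‖ ^ 2 * Gfun n x t

theorem gaussianEnergy_nonneg (V : En n × ℝ → F) {t : ℝ} (ht : 0 ≤ t) : 0 ≤ gaussianEnergy V t :=
  integral_nonneg fun x => mul_nonneg (sq_nonneg _) (Gfun_nonneg x ht)

theorem measurable_gaussianEnergy (hV : Continuous V) : Measurable (gaussianEnergy V) :=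
  measurable_integral_mul_Gfun
    (by fun_prop : Continuous fun p : ℝ × En n => ‖V (p.2, p.1)‖ ^ 2).measurable

theorem integrable_mul_sq_norm_mul_Gfun (hV : Continuous V) (hc : HasCompactSupport V) (t : ℝ)
    {f : En n → ℝ} (hf : Continuous f) :
    Integrable fun x => f x * ‖V (x, t)‖ ^ 2 * Gfun n x t := by
  simpa only [mul_right_comm] using
    integrable_mul_sq_norm_slice hV hc t (hf.fun_mul (continuous_Gfun n t))

theorem integral_mul_sq_norm_mul_Gfun_le (hV : Continuous V) (hc : HasCompactSupport V) (t : ℝ)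
    {f : En n → ℝ} (hf : Continuous f) {A B a b : ℝ}
    (hle : ∀ x, f x * Gfun n x t ≤ A * a + B * (b * Gfun n x t)) :
    ∫ x, f x * ‖V (x, t)‖ ^ 2 * Gfun n x t ≤
      A * (∫ x, a * ‖V (x, t)‖ ^ 2) + B * ∫ x, b * ‖V (x, t)‖ ^ 2 * Gfun n x t := by
  have ha := (integrable_mul_sq_norm_slice (μ := volume) hV hc t
    (f := fun _ => a) continuous_const).const_mul A
  have hb := (integrable_mul_sq_norm_mul_Gfun hV hc t
    (f := fun _ => b) continuous_const).const_mul B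
  rw [← integral_const_mul, ← integral_const_mul, ← integral_add ha hb]
  refine integral_mono (integrable_mul_sq_norm_mul_Gfun hV hc t hf) (ha.add hb) fun x => ?_
  linarith [mul_le_mul_of_nonneg_right (hle x) (sq_nonneg ‖V (x, t)‖)]

theorem ae_integrableOn_sq_norm_comp_sqrt_smul [NeZero n] (hV : Continuous V)
    (hc : HasCompactSupport V) {b β : ℝ}
    (hint : IntegrableOn
      (fun t => t ^ (-β) * ∫ x, ‖x‖ / t * ‖V (x, t)‖ ^ 2 * Gfun n x t) (Ioo 0 b)) :
    ∀ᵐ y : En n,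
      IntegrableOn (fun t => t ^ (-(β + 1 / 2)) * ‖V (√t • y, t)‖ ^ 2) (Ioo 0 b) := by
  let H : ℝ × En n → ℝ := fun p => p.1 ^ (-β) *
    (‖√p.1 • p.2‖ / p.1 * ‖V (√p.1 • p.2, p.1)‖ ^ 2 * exp (-‖p.2‖ ^ 2 / 4))
  have hHmeas : Measurable H := by
    have hVmeas : Measurable fun p : ℝ × En n => ‖V (√p.1 • p.2, p.1)‖ ^ 2 :=
      (by fun_prop : Continuous fun p : ℝ × En n => ‖V (√p.1 • p.2, p.1)‖ ^ 2).measurable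
    unfold H
    fun_prop
  have hprod : Integrable H ((volume.restrict (Ioo 0 b)).prod volume) := by
    rw [integrable_prod_iff hHmeas.aestronglyMeasurable]
    refine ⟨?_, hint.congr ?_⟩
    · filter_upwards [ae_restrict_mem measurableSet_Ioo] with t ht
      exact (integrable_comp_sqrt_smul_mul_exp ht.1
        (integrable_mul_sq_norm_mul_Gfun hV hc t
          (f := fun x => ‖x‖ / t) (by fun_prop))).const_mul (t ^ (-β))
    · filter_upwards [ae_restrict_mem measurableSet_Ioo] with t ht
      have ht0 : 0 < t := ht.1
      rw [integral_mul_Gfun ht0, ← integral_const_mul]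
      exact integral_congr_ae (.of_forall fun y => (norm_of_nonneg (by positivity)).symm)
  filter_upwards [hprod.prod_left_ae, compl_mem_ae_iff.2 (measure_singleton (0 : En n))]
    with y hy hy0
  have hnorm : ‖y‖ ≠ 0 := norm_ne_zero_iff.2 hy0
  refine (hy.mul_const (‖y‖ * exp (-‖y‖ ^ 2 / 4))⁻¹).congr ?_
  filter_upwards [ae_restrict_mem measurableSet_Ioo] with t ht
  have hrpow : t ^ (-(β + 1 / 2)) = t ^ (-β) * (√t / t) := by
    rw [neg_add, rpow_add ht.1, sqrt_div_self, sqrt_eq_rpow, rpow_neg ht.1.le (1 / 2)]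
  simp only [H]
  rw [norm_smul, norm_of_nonneg (sqrt_nonneg t), hrpow]
  field_simp

theorem exists_gaussianEnergy_le_mul_pow [NeZero n] [NormedSpace ℝ F] {m : ℕ}
    (hV : ContDiff ℝ m V) (hc : HasCompactSupport V) {b β : ℝ} (hb : 0 < b)
    (hm : (m : ℝ) ≤ β + 1 / 2)
    (hint : IntegrableOn
      (fun t => t ^ (-β) * ∫ x, ‖x‖ / t * ‖V (x, t)‖ ^ 2 * Gfun n x t) (Ioo 0 b)) :
    ∃ K, ∀ t ∈ Ioc (0 : ℝ) 1, gaussianEnergy V t ≤ K * t ^ m := by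
  obtain ⟨C, hbound⟩ := exists_norm_le_mul_sqrt_pow_of_integrableOn hV hc hb hm
  have hae := ae_integrableOn_sq_norm_comp_sqrt_smul hV.continuous hc hint
  have hgauss : Integrable fun y : En n => (C * (‖y‖ + 2) ^ m) ^ 2 * exp (-‖y‖ ^ 2 / 4) := by
    refine ((integrable_norm_add_pow_mul_exp_neg_mul_sq_norm zero_le_two
      (by norm_num : (0 : ℝ) < 1 / 4) (2 * m)).const_mul (C ^ 2)).congr (.of_forall fun y => ?_)
    simp only
    rw [show -(1 / 4) * ‖y‖ ^ 2 = -‖y‖ ^ 2 / 4 by ring]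
    ring
  refine ⟨∫ y : En n, (C * (‖y‖ + 2) ^ m) ^ 2 * exp (-‖y‖ ^ 2 / 4), fun t ht => ?_⟩
  rw [gaussianEnergy, integral_mul_Gfun ht.1 (fun x => ‖V (x, t)‖ ^ 2), ← integral_mul_const]
  refine integral_mono_of_nonneg (.of_forall fun y => by positivity) (hgauss.mul_const _) ?_
  filter_upwards [hae] with y hy
  calc ‖V (√t • y, t)‖ ^ 2 * exp (-‖y‖ ^ 2 / 4)
      ≤ (C * (‖y‖ + 2) ^ m * √t ^ m) ^ 2 * exp (-‖y‖ ^ 2 / 4) := by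
        gcongr
        exact hbound y hy t ⟨ht.1.le, ht.2⟩
    _ = (C * (‖y‖ + 2) ^ m) ^ 2 * exp (-‖y‖ ^ 2 / 4) * t ^ m := by
        rw [mul_pow _ (√t ^ m), pow_right_comm (√t), sq_sqrt ht.1.le]
        ring

end GaussianEnergy

section WeightedIntegrals

theorem integral_le_const_mul_add_const_mul_of_pos_imp_integrable {X : Type*} [MeasurableSpace X]
    {μ : Measure X} {f g h : X → ℝ} {A B : ℝ} (hA : 0 ≤ A) (hB : 0 ≤ B) (hg0 : 0 ≤ᵐ[μ] g)
    (hh0 : 0 ≤ᵐ[μ] h) (hg : Integrable g μ) (hh : 0 < ∫ x, f x ∂μ → Integrable h μ)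
    (hle : ∀ᵐ x ∂μ, f x ≤ A * g x + B * h x) :
    ∫ x, f x ∂μ ≤ A * ∫ x, g x ∂μ + B * ∫ x, h x ∂μ := by
  obtain hf | hf := le_or_gt (∫ x, f x ∂μ) 0
  · exact hf.trans (add_nonneg (mul_nonneg hA (integral_nonneg_of_ae hg0))
      (mul_nonneg hB (integral_nonneg_of_ae hh0)))
  · rw [← integral_const_mul, ← integral_const_mul,
      ← integral_add (hg.const_mul A) ((hh hf).const_mul B)]
    exact integral_mono_ae (Integrable.of_integral_ne_zero hf.ne')
      ((hg.const_mul A).add ((hh hf).const_mul B)) hle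

variable {n : ℕ} {F : Type*} [NormedAddCommGroup F] {V : En n × ℝ → F} {l t β p : ℝ}

theorem mul_le_half_of_mem_Ioo (hl : 0 < l) (ht : t ∈ Ioo 0 (1 / (2 * l))) : l * t ≤ 1 / 2 := by
  have h := ht.2.le
  rw [le_div_iff₀ (by positivity)] at h
  linarith

theorem integrable_integral_rpow_mul_sq_norm (hV : Continuous V) (hc : HasCompactSupport V)
    (hp : 0 ≤ p) : Integrable fun t => ∫ x, t ^ p * ‖V (x, t)‖ ^ 2 := by
  have hcont : Continuous fun z : En n × ℝ => z.2 ^ p * ‖V z‖ ^ 2 :=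
    ((continuous_rpow_const hp).comp continuous_snd).mul (hV.norm.pow 2)
  have hsupp : HasCompactSupport fun z : En n × ℝ => z.2 ^ p * ‖V z‖ ^ 2 :=
    (hc.comp_left (g := fun v => ‖v‖ ^ 2) (by simp)).mul_left
  exact (hcont.integrable_of_hasCompactSupport hsupp (μ := volume.prod volume)).integral_prod_right

theorem aemeasurable_sigmaFun_rpow (hl : 0 < l) (q : ℝ) :
    AEMeasurable (fun t => sigmaFun l t ^ q) (volume.restrict (Ioo 0 (1 / (2 * l)))) := by
  have hsub : Ioo 0 (1 / (2 * l)) ⊆ Icc 0 (1 / l) := fun t ht =>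
    ⟨ht.1.le, ht.2.le.trans (one_div_le_one_div_of_le hl (by linarith))⟩
  exact (((continuousOn_sigmaFun hl).mono hsub).aemeasurable measurableSet_Ioo).pow_const q

theorem integrableOn_rpow_neg_mul_integral_of_le_weight (hV : Continuous V)
    (hc : HasCompactSupport V) (hl : 0 < l) (hβ : 0 ≤ β) {W : En n → ℝ → ℝ}
    (hW : ∀ t, Continuous fun x => W x t) (hle : ∀ x t, 0 < t → ‖x‖ / t ≤ W x t)
    (hint : IntegrableOn
      (fun t => ∫ x, sigmaFun l t ^ (-β) * W x t * ‖V (x, t)‖ ^ 2 * Gfun n x t)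
      (Ioo 0 (1 / (2 * l)))) :
    IntegrableOn (fun t => t ^ (-β) * ∫ x, ‖x‖ / t * ‖V (x, t)‖ ^ 2 * Gfun n x t)
      (Ioo 0 (1 / (2 * l))) := by
  have hVmeas : Measurable fun z : ℝ × En n => ‖V (z.2, z.1)‖ ^ 2 :=
    (by fun_prop : Continuous fun z : ℝ × En n => ‖V (z.2, z.1)‖ ^ 2).measurable
  have hmeas : Measurable fun t => ∫ x, ‖x‖ / t * ‖V (x, t)‖ ^ 2 * Gfun n x t :=
    measurable_integral_mul_Gfun ((measurable_snd.norm.div measurable_fst).mul hVmeas)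
  refine hint.mono' ((measurable_id.pow_const (-β)).mul hmeas).aestronglyMeasurable ?_
  filter_upwards [ae_restrict_mem measurableSet_Ioo] with t ht
  have ht0 : 0 < t := ht.1
  have hσ : t ^ (-β) ≤ sigmaFun l t ^ (-β) :=
    rpow_neg_le_sigmaFun_rpow_neg ht0 (by positivity)
      ((mul_le_half_of_mem_Ioo hl ht).trans (by norm_num)) hβ
  have hpos : 0 ≤ sigmaFun l t ^ (-β) := rpow_nonneg (sigmaFun_pos l ht0).le _
  have hG := fun x => Gfun_nonneg (n := n) x ht0.le
  rw [norm_of_nonneg (mul_nonneg (by positivity) (integral_nonneg fun x =>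
    mul_nonneg (by positivity) (hG x))), ← integral_const_mul]
  refine integral_mono ((integrable_mul_sq_norm_mul_Gfun hV hc t
    (f := fun x => ‖x‖ / t) (by fun_prop)).const_mul _)
    (integrable_mul_sq_norm_mul_Gfun hV hc t ((hW t).const_mul _)) fun x => ?_
  have hGx := hG x
  have hWx := hle x t ht0
  calc t ^ (-β) * (‖x‖ / t * ‖V (x, t)‖ ^ 2 * Gfun n x t)
      = t ^ (-β) * (‖x‖ / t) * ‖V (x, t)‖ ^ 2 * Gfun n x t := by ring
    _ ≤ sigmaFun l t ^ (-β) * W x t * ‖V (x, t)‖ ^ 2 * Gfun n x t := by gcongr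

theorem exists_thetaFun_mul_div_le_rpow (hl : 0 < l) {ε : ℝ} (hε : 0 < ε) :
    ∃ C, 0 < C ∧ ∀ t, 0 < t → l * t ≤ 1 → thetaFun (l * t) / t ≤ C * t ^ (-(1 / 2) - ε) := by
  obtain ⟨C, hC, hθ⟩ := exists_thetaFun_div_le_rpow hε
  refine ⟨l * (C * l ^ (-(1 / 2) - ε)), by positivity, fun t ht hlt => ?_⟩
  calc thetaFun (l * t) / t = l * (thetaFun (l * t) / (l * t)) := by field_simp
    _ ≤ l * (C * (l * t) ^ (-(1 / 2) - ε)) := by gcongr; exact hθ _ (by positivity) hlt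
    _ = l * (C * l ^ (-(1 / 2) - ε)) * t ^ (-(1 / 2) - ε) := by
        rw [mul_rpow hl.le ht.le]; ring

theorem integrableOn_sigmaFun_rpow_neg_mul_thetaFun_mul_gaussianEnergy [NeZero n]
    [NormedSpace ℝ F] (hV : ContDiff ℝ (⊤ : ℕ∞) V) (hc : HasCompactSupport V) (hl : 1 ≤ l)
    (hβ : 0 ≤ β)
    (hint : IntegrableOn (fun t => t ^ (-β) * ∫ x, ‖x‖ / t * ‖V (x, t)‖ ^ 2 * Gfun n x t)
      (Ioo 0 (1 / (2 * l)))) :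
    IntegrableOn
      (fun t => sigmaFun l t ^ (-β) * (thetaFun (l * t) / t) * gaussianEnergy V t)
      (Ioo 0 (1 / (2 * l))) := by
  have hl0 : 0 < l := zero_lt_one.trans_le hl
  have hfloor := Nat.floor_le (by positivity : 0 ≤ β + 1 / 2)
  have hlt := Nat.lt_floor_add_one (β + 1 / 2)
  set m := ⌊β + 1 / 2⌋₊
  -- The gap between `β + 1 / 2` and `m + 1` leaves room for the logarithm in `thetaFun`.
  obtain ⟨ε, hε, hεm⟩ : ∃ ε, 0 < ε ∧ β + 1 / 2 + ε < m + 1 :=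
    ⟨(m + 1 - (β + 1 / 2)) / 2, by linarith, by linarith⟩
  obtain ⟨K, henergy⟩ := exists_gaussianEnergy_le_mul_pow (m := m)
    (hV.of_le (by exact_mod_cast le_top)) hc (by positivity) hfloor hint
  obtain ⟨N, -, hσ⟩ := exists_sigmaFun_rpow_neg_le
  obtain ⟨C, hC, hθ⟩ := exists_thetaFun_mul_div_le_rpow hl0 hε
  refine integrableOn_Ioo_of_norm_le_rpow (C := exp (β * N) * C * K)
    (r := -β + (-(1 / 2) - ε) + m) (by linarith)
    (((aemeasurable_sigmaFun_rpow hl0 (-β)).mul ((measurable_thetaFun.comp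
      (measurable_const_mul l)).div measurable_id).aemeasurable).mul
      (measurable_gaussianEnergy hV.continuous).aemeasurable).aestronglyMeasurable fun t ht => ?_
  have ht0 : 0 < t := ht.1
  have hlt1 : l * t ≤ 1 := (mul_le_half_of_mem_Ioo hl0 ht).trans (by norm_num)
  have hE := gaussianEnergy_nonneg V ht0.le
  have hσ0 : 0 ≤ sigmaFun l t ^ (-β) := rpow_nonneg (sigmaFun_pos l ht0).le _
  have hθ0 : 0 ≤ thetaFun (l * t) / t :=
    div_nonneg (thetaFun_nonneg (by positivity) hlt1) ht0.le
  rw [norm_of_nonneg (by positivity)]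
  calc sigmaFun l t ^ (-β) * (thetaFun (l * t) / t) * gaussianEnergy V t
      ≤ (exp (β * N) * t ^ (-β)) * (C * t ^ (-(1 / 2) - ε)) * (K * t ^ m) := by
        gcongr
        · exact hσ l t β ht0 (by positivity) hlt1 hβ
        · exact hθ t ht0 hlt1
        · exact henergy t ⟨ht0, by nlinarith⟩
    _ = exp (β * N) * C * K * t ^ (-β + (-(1 / 2) - ε) + m) := by
        rw [rpow_add ht0, rpow_add ht0, rpow_natCast]
        ring

theorem integral_weight_mul_sq_norm_mul_Gfun_le [NormedSpace ℝ F]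
    (hV : ContDiff ℝ (⊤ : ℕ∞) V) (hc : HasCompactSupport V) (hl : 1 ≤ l) (hβ : 0 ≤ β)
    (hp : 0 ≤ p) {A B : ℝ} (hA : 0 ≤ A) (hB : 0 ≤ B) {W : En n → ℝ → ℝ}
    (hW : ∀ t, Continuous fun x => W x t) (hW0 : ∀ t, 0 < t → W 0 t = 0)
    (hle : ∀ x t, 0 < t → ‖x‖ / t ≤ W x t)
    (hpointwise : ∀ x, ∀ t ∈ Ioo 0 (1 / (2 * l)), sigmaFun l t ^ (-β) * W x t * Gfun n x t ≤
      A * t ^ p + B * (sigmaFun l t ^ (-β) * (thetaFun (l * t) / t) * Gfun n x t)) :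
    ∫ t in Ico 0 (1 / (2 * l)),
        ∫ x, sigmaFun l t ^ (-β) * W x t * ‖V (x, t)‖ ^ 2 * Gfun n x t ≤
      A * (∫ t in Ico 0 (1 / (2 * l)), ∫ x, t ^ p * ‖V (x, t)‖ ^ 2) +
        B * ∫ t in Ico 0 (1 / (2 * l)),
          ∫ x, sigmaFun l t ^ (-β) * (thetaFun (l * t) / t) * ‖V (x, t)‖ ^ 2 * Gfun n x t := by
  have hl0 : 0 < l := zero_lt_one.trans_le hl
  have hVc := hV.continuous
  have hIoo : ∀ᵐ t ∂volume.restrict (Ioo 0 (1 / (2 * l))), t ∈ Ioo 0 (1 / (2 * l)) :=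
    ae_restrict_mem measurableSet_Ioo
  simp only [setIntegral_congr_set (Ioo_ae_eq_Ico (a := (0 : ℝ)) (b := 1 / (2 * l))).symm]
  refine integral_le_const_mul_add_const_mul_of_pos_imp_integrable hA hB ?_ ?_
    (integrable_integral_rpow_mul_sq_norm hVc hc hp).integrableOn (fun hpos => ?_) ?_
  · filter_upwards [hIoo] with t ht
    exact integral_nonneg fun x => mul_nonneg (rpow_nonneg ht.1.le p) (sq_nonneg _)
  · filter_upwards [hIoo] with t ht
    have hθ := thetaFun_nonneg (mul_pos hl0 ht.1)
      ((mul_le_half_of_mem_Ioo hl0 ht).trans (by norm_num))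
    have hσ : 0 ≤ sigmaFun l t ^ (-β) := rpow_nonneg (sigmaFun_pos l ht.1).le _
    exact integral_nonneg fun x => mul_nonneg
      (mul_nonneg (mul_nonneg hσ (div_nonneg hθ ht.1.le)) (sq_nonneg _)) (Gfun_nonneg x ht.1.le)
  · have : NeZero n := by
      refine ⟨fun hn => hpos.ne' ?_⟩
      subst hn
      refine setIntegral_eq_zero_of_forall_eq_zero fun t ht => ?_
      simp only [Subsingleton.elim _ (0 : En 0), hW0 t ht.1, mul_zero, zero_mul, integral_zero]
    simpa only [IntegrableOn, gaussianEnergy, ← integral_const_mul, ← mul_assoc] using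
      integrableOn_sigmaFun_rpow_neg_mul_thetaFun_mul_gaussianEnergy hV hc hl hβ
        (integrableOn_rpow_neg_mul_integral_of_le_weight hVc hc hl0 hβ hW hle
          (Integrable.of_integral_ne_zero hpos.ne'))
  · filter_upwards [hIoo] with t ht
    exact integral_mul_sq_norm_mul_Gfun_le hVc hc t ((hW t).const_mul _)
      fun x => hpointwise x t ht

end WeightedIntegrals

theorem exists_integral_weight_mul_sq_norm_mul_Gfun_le.{u} (n : ℕ) :
    ∃ N, 0 < N ∧ ∀ α δ l p, 1 ≤ α → 0 < δ → δ ≤ 1 → l = α / δ ^ 2 → 0 ≤ p → p ≤ 2 * α →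
      ∀ W : En n → ℝ → ℝ, (∀ t, Continuous fun x => W x t) →
      (∀ x t, 0 < t → ‖x‖ / t ≤ W x t) →
      (∀ x t, 0 < t → W x t ≤ radialWeight α δ ‖x‖ t) →
      ∀ {F : Type u} [NormedAddCommGroup F] [NormedSpace ℝ F] (V : En n × ℝ → F),
      ContDiff ℝ (⊤ : ℕ∞) V → HasCompactSupport V →
      ∫ t in Ico 0 (1 / (2 * l)),
          ∫ x, sigmaFun l t ^ (-(2 * α) + p) * W x t * ‖V (x, t)‖ ^ 2 * Gfun n x t ≤
        N * exp (2 * α * N) * l ^ (2 * α + N) *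
            (∫ t in Ico 0 (1 / (2 * l)), ∫ x, t ^ p * ‖V (x, t)‖ ^ 2) +
          N * δ * ∫ t in Ico 0 (1 / (2 * l)), ∫ x,
            sigmaFun l t ^ (-(2 * α) + p) * (thetaFun (l * t) / t) *
              ‖V (x, t)‖ ^ 2 * Gfun n x t := by
  obtain ⟨N, hN, hpointwise⟩ := exists_sigmaFun_rpow_add_mul_radialWeight_mul_Gfun_le n
  refine ⟨N, hN, fun α δ l p hα hδ hδ1 hl hp hpα W hW hle hge F _ _ V hV hc => ?_⟩
  have hl1 := one_le_of_eq_div_sq hα hδ hδ1 hl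
  have hl0 : 0 < l := zero_lt_one.trans_le hl1
  have hW0 : ∀ t, 0 < t → W 0 t = 0 := fun t ht => le_antisymm
    (by simpa [radialWeight] using hge 0 t ht) (by simpa using hle 0 t ht)
  have hbound : ∀ x, ∀ t ∈ Ioo 0 (1 / (2 * l)),
      sigmaFun l t ^ (-(2 * α) + p) * W x t * Gfun n x t ≤
        N * exp (2 * α * N) * l ^ (2 * α + N) * t ^ p +
          N * δ * (sigmaFun l t ^ (-(2 * α) + p) * (thetaFun (l * t) / t) * Gfun n x t) := by
    intro x t ht
    refine le_trans ?_ (hpointwise α δ l t p hα hδ hδ1 hl ht.1 (mul_le_half_of_mem_Ioo hl0 ht) hp x)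
    exact mul_le_mul_of_nonneg_right (mul_le_mul_of_nonneg_left (hge x t ht.1)
      (rpow_nonneg (sigmaFun_pos l ht.1).le _)) (Gfun_nonneg x ht.1.le)
  rw [show -(2 * α) + p = -(2 * α - p) by ring] at hbound ⊢
  exact integral_weight_mul_sq_norm_mul_Gfun_le hV hc hl1 (by linarith) hp (by positivity)
    (by positivity) hW hW0 hle hbound

section SpatialDerivative

variable {E F : Type*} [NormedAddCommGroup E] [NormedSpace ℝ E] [NormedAddCommGroup F]
  [NormedSpace ℝ F] {w : E → ℝ → F}

theorem contDiff_fderiv_slice (hw : ContDiff ℝ (⊤ : ℕ∞) (Function.uncurry w)) :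
    ContDiff ℝ (⊤ : ℕ∞) fun z : E × ℝ => fderiv ℝ (fun y => w y z.2) z.1 :=
  ContDiff.fderiv (f := fun (z : E × ℝ) y => w y z.2)
    (hw.comp (contDiff_snd.prodMk (contDiff_snd.comp contDiff_fst))) contDiff_fst (by simp)

theorem hasCompactSupport_fderiv_slice (hc : HasCompactSupport (Function.uncurry w)) :
    HasCompactSupport fun z : E × ℝ => fderiv ℝ (fun y => w y z.2) z.1 := by
  refine HasCompactSupport.intro hc.isCompact fun z hz => ?_
  have hslice : (fun y => w y z.2) =ᶠ[nhds z.1] fun _ => 0 :=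
    ((Continuous.prodMk_left z.2).tendsto z.1).eventually (notMem_tsupport_iff_eventuallyEq.1 hz)
  rw [hslice.fderiv_eq, fderiv_fun_const, Pi.zero_apply]

theorem norm_gradient {E : Type*} [NormedAddCommGroup E] [InnerProductSpace ℝ E]
    [CompleteSpace E] (f : E → ℝ) (x : E) : ‖gradient f x‖ = ‖fderiv ℝ f x‖ :=
  (InnerProductSpace.toDual ℝ E).symm.norm_map _

end SpatialDerivative

theorem weighted_gaussian_inequalities_general.{u} (n : ℕ) :
    ∃ N : ℝ, 0 < N ∧ ∀ α δ : ℝ, 1 ≤ α → 0 < δ → δ ≤ 1 → ∀ l : ℝ, l = α / δ ^ 2 →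
      ∀ {F : Type u} [NormedAddCommGroup F] [NormedSpace ℝ F] (w : En n → ℝ → F),
      ContDiff ℝ (⊤ : ℕ∞) (Function.uncurry w) → HasCompactSupport (Function.uncurry w) →
      (∫ t in Ico 0 (1 / (2 * l)), ∫ x,
          sigmaFun l t ^ (-(2 * α)) * (‖x‖ / t + ‖x‖ ^ 3 / (α * t ^ 2)) *
            ‖w x t‖ ^ 2 * Gfun n x t ≤
        N * exp (2 * α * N) * l ^ (2 * α + N) *
            (∫ t in Ico 0 (1 / (2 * l)), ∫ x, ‖w x t‖ ^ 2) +
          N * δ * ∫ t in Ico 0 (1 / (2 * l)), ∫ x,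
            sigmaFun l t ^ (-(2 * α)) * (thetaFun (l * t) / t) * ‖w x t‖ ^ 2 * Gfun n x t) ∧
      ∫ t in Ico 0 (1 / (2 * l)), ∫ x,
          sigmaFun l t ^ (-(2 * α) + 1) *
            (‖x‖ / t + ‖x‖ ^ 3 / (α * t ^ 2) + ‖x‖ ^ 2 / (δ * t)) *
            ‖fderiv ℝ (fun y => w y t) x‖ ^ 2 * Gfun n x t ≤
        N * exp (2 * α * N) * l ^ (2 * α + N) *
            (∫ t in Ico 0 (1 / (2 * l)), ∫ x, t * ‖fderiv ℝ (fun y => w y t) x‖ ^ 2) +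
          N * δ * ∫ t in Ico 0 (1 / (2 * l)), ∫ x,
            sigmaFun l t ^ (-(2 * α) + 1) * (thetaFun (l * t) / t) *
              ‖fderiv ℝ (fun y => w y t) x‖ ^ 2 * Gfun n x t := by
  obtain ⟨N, hN, hweight⟩ := exists_integral_weight_mul_sq_norm_mul_Gfun_le.{u} n
  refine ⟨N, hN, fun α δ hα hδ hδ1 l hl F _ _ w hw hc => ⟨?_, ?_⟩⟩
  · simpa only [add_zero, rpow_zero, one_mul, Function.uncurry_apply_pair] using
      hweight α δ l 0 hα hδ hδ1 hl le_rfl (by linarith)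
        (fun x t => ‖x‖ / t + ‖x‖ ^ 3 / (α * t ^ 2)) (by fun_prop)
        (fun x t ht => le_add_of_nonneg_right (by positivity))
        (fun x t ht => le_add_of_nonneg_right (by positivity)) (Function.uncurry w) hw hc
  · simpa only [rpow_one, radialWeight] using
      hweight α δ l 1 hα hδ hδ1 hl zero_le_one (by linarith)
        (fun x t => radialWeight α δ ‖x‖ t) (by unfold radialWeight; fun_prop)
        (fun x t ht => by
          rw [radialWeight, add_assoc]
          exact le_add_of_nonneg_right (by positivity))
        (fun x t _ => le_rfl) _ (contDiff_fderiv_slice hw) (hasCompactSupport_fderiv_slice hc)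

/-- Lemma `logi` of the paper: for `α > 1`, `δ ∈ (0,1)` and
`λ = α/δ²` there is a constant `N > 0` depending only on `n` such that for every
`w ∈ C_0^∞(ℝⁿ × [0, 1/(2λ)))` the two weighted inequalities below hold. -/
theorem weighted_gaussian_inequalities (n : ℕ) :
    ∃ N : ℝ, 0 < N ∧
      ∀ α δ : ℝ, 1 < α → 0 < δ → δ < 1 →
        ∀ l : ℝ, l = α / δ ^ 2 →
          ∀ w : En n → ℝ → ℝ,
            ContDiff ℝ (⊤ : ℕ∞) (Function.uncurry w) →
            HasCompactSupport (Function.uncurry w) →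
            Function.support (Function.uncurry w) ⊆
              (Set.univ : Set (En n)) ×ˢ Set.Iio (1 / (2 * l)) →
            ((∫ t in Set.Ico (0 : ℝ) (1 / (2 * l)), ∫ x : En n,
                sigmaFun l t ^ (-(2 * α)) * (‖x‖ / t + ‖x‖ ^ 3 / (α * t ^ 2)) *
                  w x t ^ 2 * Gfun n x t) ≤
              N * Real.exp (2 * α * N) * l ^ (2 * α + N) *
                  (∫ t in Set.Ico (0 : ℝ) (1 / (2 * l)), ∫ x : En n, w x t ^ 2)
                + N * δ * ∫ t in Set.Ico (0 : ℝ) (1 / (2 * l)), ∫ x : En n,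
                    sigmaFun l t ^ (-(2 * α)) * (thetaFun (l * t) / t) *
                      w x t ^ 2 * Gfun n x t) ∧
            ((∫ t in Set.Ico (0 : ℝ) (1 / (2 * l)), ∫ x : En n,
                sigmaFun l t ^ (-(2 * α) + 1) *
                  (‖x‖ / t + ‖x‖ ^ 3 / (α * t ^ 2) + ‖x‖ ^ 2 / (δ * t)) *
                  ‖gradient (fun y => w y t) x‖ ^ 2 * Gfun n x t) ≤
              N * Real.exp (2 * α * N) * l ^ (2 * α + N) *
                  (∫ t in Set.Ico (0 : ℝ) (1 / (2 * l)), ∫ x : En n,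
                    t * ‖gradient (fun y => w y t) x‖ ^ 2)
                + N * δ * ∫ t in Set.Ico (0 : ℝ) (1 / (2 * l)), ∫ x : En n,
                    sigmaFun l t ^ (-(2 * α) + 1) * (thetaFun (l * t) / t) *
                      ‖gradient (fun y => w y t) x‖ ^ 2 * Gfun n x t) := by
  obtain ⟨N, hN, hgeneral⟩ := weighted_gaussian_inequalities_general n
  refine ⟨N, hN, fun α δ hα hδ hδ1 l hl w hw hc _ => ?_⟩
  simpa only [norm_gradient, norm_eq_abs, sq_abs] using hgeneral α δ hα.le hδ hδ1.le l hl w hw hc
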